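/- Let g be a Leibniz algebra, V a representation of g, and R : V → g a relative Rota-Baxter operator (i.e., [R(v), R(v')] = R(l(R(v), v') + r(v, R(v'))) for all v, v' in V). Then the bracket [v, v']_R := l(R(v), v') + r(v, R(v')) makes V a Leibniz algebra. -/

import Mathlib

/-! Expanding both sides of the Leibniz identity for `[·,·]_R` by additivity and replacing
`R [v, v']_R` by `[R v, R v']`, the terms are matched by the three axioms of a representation,
applied to the pairs `(R x, R y)`, `(R x, R z)` and `(R y, R z)` respectively. -/

/-- A (left) Leibniz bracket. -/
def IsLeibniz {g : Type*} [AddCommGroup g] (br : g → g → g) : Prop :=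
  ∀ x y z, br x (br y z) = br (br x y) z + br y (br x z)

/-- A representation of a Leibniz algebra. -/
def IsLeibnizRep {g U : Type*} [AddCommGroup g] [AddCommGroup U]
    (br : g → g → g) (l : g → U → U) (r : U → g → U) : Prop :=
  (∀ x y v, l x (l y v) = l (br x y) v + l y (l x v)) ∧
  (∀ x y v, l x (r v y) = r (l x v) y + r v (br x y)) ∧
  (∀ x y v, r v (br x y) = r (r v x) y + l x (r v y))

/-- A relative Rota-Baxter operator. -/
def IsRBO {g V : Type*} [AddCommGroup g] [AddCommGroup V]
    (br : g → g → g) (lV : g → V → V) (rV : V → g → V) (R : V → g) : Prop :=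
  ∀ v v', br (R v) (R v') = R (lV (R v) v' + rV v (R v'))

/-- A representation of a relative Rota-Baxter Leibniz algebra `V →^R g`:
a `2`-term complex `S : W → H` with `H`, `W` representations of `g`, together with
pairings `l : V ⊗ H → W` and `r : H ⊗ V → W` satisfying the eight compatibility
identities. -/
def IsRRBRep {g V H W : Type*} [AddCommGroup g] [AddCommGroup V]
    [AddCommGroup H] [AddCommGroup W]
    (br : g → g → g) (lV : g → V → V) (rV : V → g → V) (R : V → g)
    (lh : g → H → H) (rh : H → g → H) (lW : g → W → W) (rW : W → g → W)
    (S : W → H) (l : V → H → W) (r : H → V → W) : Prop :=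
  IsLeibnizRep br lh rh ∧ IsLeibnizRep br lW rW ∧
  (∀ x v hh, lW x (l v hh) = l (lV x v) hh + l v (lh x hh)) ∧
  (∀ x v hh, l v (lh x hh) = l (rV v x) hh + lW x (l v hh)) ∧
  (∀ x v hh, l v (rh hh x) = rW (l v hh) x + r hh (rV v x)) ∧
  (∀ x v hh, lW x (r hh v) = r (lh x hh) v + r hh (lV x v)) ∧
  (∀ x v hh, r hh (lV x v) = r (rh hh x) v + lW x (r hh v)) ∧
  (∀ x v hh, r hh (rV v x) = rW (r hh v) x + l v (rh hh x)) ∧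
  (∀ v w, lh (R v) (S w) = S (lW (R v) w + l v (S w))) ∧
  (∀ v w, rh (S w) (R v) = S (r (S w) v + rW w (R v)))

/-- the bracket `[v,v']_R = l(R v, v') + r(v, R v')` induced by a relative
Rota-Baxter operator makes `V` a Leibniz algebra. -/
theorem induced_bracket_isLeibniz
    {k g V : Type*} [Field k] [AddCommGroup g] [Module k g]
    [AddCommGroup V] [Module k V]
    (br : g →ₗ[k] g →ₗ[k] g) (lV : g →ₗ[k] V →ₗ[k] V) (rV : V →ₗ[k] g →ₗ[k] V)
    (R : V →ₗ[k] g)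
    (hg : IsLeibniz (fun x y => br x y))
    (hrep : IsLeibnizRep (fun x y => br x y) (fun x v => lV x v) (fun v x => rV v x))
    (hR : IsRBO (fun x y => br x y) (fun x v => lV x v) (fun v x => rV v x) (fun v => R v)) :
    IsLeibniz (fun v v' : V => lV (R v) v' + rV v (R v')) := by
  obtain ⟨hl, hlr, hr⟩ := hrep
  intro x y z
  have hll := hl (R x) (R y) z
  have hxz := hlr (R x) (R z) y
  have hyz := hr (R y) (R z) x
  simp only [IsRBO] at hR
  dsimp only at hll hxz hyz ⊢
  rw [← hR y z, ← hR x y, ← hR x z]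
  simp only [map_add, LinearMap.add_apply]
  rw [hll, hxz, hyz]
  abel
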